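/- Let Λ be a unimodular lattice in ℝ^d with dual lattice Λ*. For every τ ∈ T one has S_1(Λ,τ) ≤ (S_1(Λ*,−τ) + d·log(d!))/(d−1); in particular, S_1(Λ,τ) ≤ S_1(Λ*,−τ)/(d−1) + C for a constant C depending only on d. -/

import Mathlib

open Filter

noncomputable section

/-- A unimodular lattice in `ℝ^d`: the set of integer linear combinations of a basis of `ℝ^d`
whose matrix has determinant `±1`. -/
def IsUnimodularLattice (d : ℕ) (Λ : Set (Fin d → ℝ)) : Prop :=
  ∃ B : Matrix (Fin d) (Fin d) ℝ, |B.det| = 1 ∧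
    Λ = {v | ∃ x : Fin d → ℤ, v = B.mulVec fun i => (x i : ℝ)}

/-- The dual lattice `Λ* = {w : ⟨w, z⟩ ∈ ℤ for all z ∈ Λ}`. -/
def dualLattice (d : ℕ) (Λ : Set (Fin d → ℝ)) : Set (Fin d → ℝ) :=
  {w | ∀ z ∈ Λ, ∃ c : ℤ, ∑ i, w i * z i = (c : ℝ)}

/-- The `k`-th successive minimum `λ_k(B_τ, Λ)` of the box
`B_τ = {z : |z_i| ≤ exp (τ i)}` with respect to the lattice `Λ`. -/
def succMin (d : ℕ) (Λ : Set (Fin d → ℝ)) (τ : Fin d → ℝ) (k : ℕ) : ℝ :=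
  sInf {lam : ℝ | 0 < lam ∧ ∃ v : Fin k → (Fin d → ℝ),
    (∀ l, v l ∈ Λ) ∧ LinearIndependent ℝ v ∧ ∀ l i, |v l i| ≤ lam * Real.exp (τ i)}

/-- `L_k(Λ, τ) = log λ_k(B_τ, Λ)`. -/
def Lk (d : ℕ) (Λ : Set (Fin d → ℝ)) (τ : Fin d → ℝ) (k : ℕ) : ℝ :=
  Real.log (succMin d Λ τ k)

/-- `S_k(Λ, τ) = L_1(Λ, τ) + ⋯ + L_k(Λ, τ)`. -/
def Sk (d : ℕ) (Λ : Set (Fin d → ℝ)) (τ : Fin d → ℝ) (k : ℕ) : ℝ :=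
  ∑ j ∈ Finset.Icc 1 k, Lk d Λ τ j

open MeasureTheory Matrix

/-! Let `w` be a dual vector almost attaining the dual minimum and `j` the coordinate maximising
`|w i| * exp (τ i)`. Replacing the `j`-th coordinate form by `⟨w, ·⟩`, Minkowski's linear forms
theorem (`exists_int_ne_zero_abs_mulVec_lt`) gives a nonzero lattice vector `z` whose coordinates
other than `j` are small and for which `|⟨w, z⟩| < 1`. Since `⟨w, z⟩` is an integer, it vanishes, so
`z j` is determined by the other coordinates, and the choice of `j` bounds it by `d - 1` times their
common bound, all measured relative to `exp (τ i)`. -/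

section LinearForms

variable {ι : Type*} [Fintype ι]

/-- The lattice generated by the columns of `B`, in the shape used by `IsUnimodularLattice`; it has
full rank exactly when `B.det ≠ 0`, and its covolume is then `|B.det|`. -/
def columnLattice (B : Matrix ι ι ℝ) : Set (ι → ℝ) :=
  {v | ∃ x : ι → ℤ, v = B *ᵥ fun i => (x i : ℝ)}

theorem mulVec_intCast_ne_zero [DecidableEq ι] {B : Matrix ι ι ℝ} (hB : B.det ≠ 0) {x : ι → ℤ}
    (hx : x ≠ 0) : (B *ᵥ fun i => (x i : ℝ)) ≠ 0 := fun h =>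
  hx (funext fun i => Int.cast_eq_zero.mp (congrFun (eq_zero_of_mulVec_eq_zero hB h) i))

theorem det_one_updateRow [DecidableEq ι] {R : Type*} [CommRing R] (j : ι) (w : ι → R) :
    ((1 : Matrix ι ι R).updateRow j w).det = w j := by
  rw [← cramer_transpose_apply, transpose_one, cramer_one, Module.End.one_apply]

theorem volume_pi_Ioo_neg_self {c : ι → ℝ} (hc : ∀ i, 0 ≤ c i) :
    volume (Set.univ.pi fun i => Set.Ioo (-c i) (c i)) =
      ENNReal.ofReal ((∏ i, c i) * 2 ^ Fintype.card ι) := by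
  rw [Real.volume_pi_Ioo, ← ENNReal.ofReal_prod_of_nonneg fun i _ => by linarith [hc i],
    ← Finset.card_univ, ← Finset.prod_const, ← Finset.prod_mul_distrib]
  congr! 2
  ring

theorem exists_int_ne_zero_abs_mulVec_lt [DecidableEq ι] {M : Matrix ι ι ℝ} (hM : M.det ≠ 0)
    {c : ι → ℝ} (hc : ∀ i, 0 < c i) (hMc : |M.det| < ∏ i, c i) :
    ∃ x : ι → ℤ, x ≠ 0 ∧ ∀ i, |(M *ᵥ fun k => (x k : ℝ)) i| < c i := by
  classical
  let b : Module.Basis ι ℝ (ι → ℝ) :=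
    basisOfPiSpaceOfLinearIndependent (linearIndependent_cols_of_det_ne_zero hM)
  have hb : ⇑b = M.col := coe_basisOfPiSpaceOfLinearIndependent _
  have : Countable (Submodule.span ℤ (Set.range b)).toAddSubgroup :=
    inferInstanceAs (Countable (Submodule.span ℤ (Set.range b)))
  let box : Set (ι → ℝ) := Set.univ.pi fun i => Set.Ioo (-c i) (c i)
  have box_symm : ∀ v ∈ box, -v ∈ box := fun v hv i hi =>
    ⟨neg_lt_neg (hv i hi).2, neg_lt.mp (hv i hi).1⟩
  have box_convex : Convex ℝ box := convex_pi fun i _ => convex_Ioo _ _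
  have volume_domain : volume (ZSpan.fundamentalDomain b) = ENNReal.ofReal |M.det| := by
    rw [ZSpan.volume_fundamentalDomain, hb, ← det_transpose M]
    rfl
  have volume_lt :
      volume (ZSpan.fundamentalDomain b) * 2 ^ Module.finrank ℝ (ι → ℝ) < volume box := by
    have two_pow : (2 : ENNReal) ^ Fintype.card ι = ENNReal.ofReal (2 ^ Fintype.card ι) := by
      simp [ENNReal.ofReal_pow]
    rw [volume_domain, volume_pi_Ioo_neg_self fun i => (hc i).le,
      Module.finrank_fintype_fun_eq_card, two_pow, ← ENNReal.ofReal_mul (abs_nonneg _)]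
    have prod_pos : 0 < ∏ i, c i := Finset.prod_pos fun i _ => hc i
    exact (ENNReal.ofReal_lt_ofReal_iff (by positivity)).mpr (by gcongr)
  obtain ⟨⟨y, hyL⟩, hy0, hy⟩ := exists_ne_zero_mem_lattice_of_measure_mul_two_pow_lt_measure
    (ZSpan.isAddFundamentalDomain' b volume) box_symm box_convex volume_lt
  obtain ⟨x, rfl⟩ := (Submodule.mem_span_range_iff_exists_fun ℤ).mp hyL
  have sum_eq : ∑ i, x i • b i = M *ᵥ fun k => (x k : ℝ) := by
    simp only [mulVec_eq_sum, hb, ← Int.cast_smul_eq_zsmul ℝ, op_smul_eq_smul]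
    rfl
  refine ⟨x, ?_, fun i => abs_lt.mpr (sum_eq ▸ hy i (Set.mem_univ i))⟩
  rintro rfl
  exact hy0 (Subtype.ext (by simp))

theorem exists_mem_columnLattice_abs_dotProduct_lt [DecidableEq ι] {B : Matrix ι ι ℝ}
    (hB : B.det ≠ 0) {w : ι → ℝ} {j : ι} (hwj : w j ≠ 0) {c : ι → ℝ} (hc : ∀ i, 0 < c i)
    (hwc : |w j| * |B.det| < ∏ i, c i) :
    ∃ z ∈ columnLattice B, z ≠ 0 ∧ |w ⬝ᵥ z| < c j ∧ ∀ i ≠ j, |z i| < c i := by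
  have det_eq : ((1 : Matrix ι ι ℝ).updateRow j w * B).det = w j * B.det := by
    rw [det_mul, det_one_updateRow]
  obtain ⟨x, hx0, hx⟩ := exists_int_ne_zero_abs_mulVec_lt
    (det_eq ▸ mul_ne_zero hwj hB) hc (by rwa [det_eq, abs_mul])
  rw [← mulVec_mulVec, updateRow_mulVec, one_mulVec] at hx
  refine ⟨_, ⟨x, rfl⟩, mulVec_intCast_ne_zero hB hx0, by simpa using hx j, fun i hij => ?_⟩
  simpa only [Function.update_of_ne hij] using hx i

theorem prod_update_mul_left_one_mul [DecidableEq ι] {R : Type*} [CommMonoid R] (r : R) (a : ι → R)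
    (j : ι) :
    (∏ i, Function.update (fun i => r * a i) j 1 i) * a j =
      r ^ (Fintype.card ι - 1) * ∏ i, a i := by
  rw [Finset.prod_update_of_mem (Finset.mem_univ j), one_mul, Finset.prod_mul_distrib,
    ← Finset.erase_eq, Finset.prod_const, Finset.card_erase_of_mem (Finset.mem_univ j),
    Finset.card_univ, mul_assoc, Finset.prod_erase_mul _ _ (Finset.mem_univ j)]

theorem abs_apply_le_of_dotProduct_eq_zero {w z a : ι → ℝ} {j : ι} {r : ℝ}
    (hwz : w ⬝ᵥ z = 0) (hwj : w j ≠ 0) (hr : 0 ≤ r) (hmax : ∀ i, |w i| * a i ≤ |w j| * a j)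
    (hz : ∀ i ≠ j, |z i| ≤ r * a i) :
    |z j| ≤ ((Fintype.card ι : ℝ) - 1) * r * a j := by
  classical
  have isolate : w j * z j = -∑ i ∈ Finset.univ.erase j, w i * z i :=
    eq_neg_of_add_eq_zero_left ((Finset.add_sum_erase _ _ (Finset.mem_univ j)).trans hwz)
  have term_le : ∀ i ∈ Finset.univ.erase j, |w i * z i| ≤ r * (|w j| * a j) := fun i hi =>
    calc |w i * z i| = |w i| * |z i| := abs_mul _ _
      _ ≤ |w i| * (r * a i) := by gcongr; exact hz i (Finset.ne_of_mem_erase hi)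
      _ = r * (|w i| * a i) := by ring
      _ ≤ r * (|w j| * a j) := mul_le_mul_of_nonneg_left (hmax i) hr
  refine le_of_mul_le_mul_left ?_ (abs_pos.mpr hwj)
  calc |w j| * |z j| = |∑ i ∈ Finset.univ.erase j, w i * z i| := by
        rw [← abs_mul, isolate, abs_neg]
    _ ≤ ∑ i ∈ Finset.univ.erase j, |w i * z i| := Finset.abs_sum_le_sum_abs _ _
    _ ≤ ∑ _i ∈ Finset.univ.erase j, r * (|w j| * a j) := Finset.sum_le_sum term_le
    _ = |w j| * (((Fintype.card ι : ℝ) - 1) * r * a j) := by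
        rw [Finset.sum_const, nsmul_eq_mul, Finset.cast_card_erase_of_mem (Finset.mem_univ j),
          Finset.card_univ]
        ring

theorem exists_pos_forall_mem_columnLattice_le_norm [DecidableEq ι] {B : Matrix ι ι ℝ}
    (hB : B.det ≠ 0) : ∃ ε > 0, ∀ v ∈ columnLattice B, v ≠ 0 → ε ≤ ‖v‖ := by
  obtain ⟨K, hK, hinv⟩ := (toLin' B⁻¹).toContinuousLinearMap.bound
  refine ⟨K⁻¹, inv_pos.mpr hK, ?_⟩
  rintro _ ⟨x, rfl⟩ hv
  obtain ⟨k, hk⟩ : ∃ k, x k ≠ 0 := by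
    by_contra! hx
    exact hv (by simp [hx, ← Pi.zero_def])
  have inv_mulVec : B⁻¹ *ᵥ (B *ᵥ fun i => (x i : ℝ)) = fun i => (x i : ℝ) := by
    rw [mulVec_mulVec, nonsing_inv_mul _ hB.isUnit, one_mulVec]
  rw [inv_le_iff_one_le_mul₀' hK]
  calc (1 : ℝ) ≤ ‖(x k : ℝ)‖ := by
        rw [Real.norm_eq_abs]
        exact_mod_cast Int.one_le_abs hk
    _ ≤ ‖fun i => (x i : ℝ)‖ := norm_le_pi_norm (fun i => (x i : ℝ)) k
    _ ≤ K * ‖B *ᵥ fun i => (x i : ℝ)‖ := by simpa [inv_mulVec] using hinv (B *ᵥ fun i => (x i : ℝ))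

end LinearForms

section Transference

variable {d : ℕ} {B : Matrix (Fin d) (Fin d) ℝ}

theorem dualLattice_columnLattice (hB : B.det ≠ 0) :
    dualLattice d (columnLattice B) = columnLattice B⁻¹ᵀ := by
  ext w
  constructor
  · intro hw
    choose x hx using fun k => hw (B.col k) ⟨Pi.single k 1, by
      rw [← B.mulVec_single_one k]
      congr! 1
      ext i
      simp [Pi.single_apply]⟩
    have vecMul_eq : w ᵥ* B = fun k => (x k : ℝ) := funext hx
    refine ⟨x, ?_⟩
    rw [mulVec_transpose, ← vecMul_eq, vecMul_vecMul, mul_nonsing_inv _ hB.isUnit, vecMul_one]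
  · rintro ⟨x, rfl⟩ _ ⟨y, rfl⟩
    refine ⟨∑ i, x i * y i, ?_⟩
    change (B⁻¹ᵀ *ᵥ fun i => (x i : ℝ)) ⬝ᵥ (B *ᵥ fun i => (y i : ℝ)) = _
    rw [mulVec_transpose, ← dotProduct_mulVec, mulVec_mulVec, nonsing_inv_mul _ hB.isUnit,
      one_mulVec]
    simp [dotProduct]

theorem exists_mem_columnLattice_abs_le (hB : B.det ≠ 0) (hd : 2 ≤ d)
    {w : Fin d → ℝ} (hw : w ∈ dualLattice d (columnLattice B)) (hw0 : w ≠ 0)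
    {a : Fin d → ℝ} (ha : ∀ i, 0 < a i) {r : ℝ} (hr : 0 < r)
    (hwr : ∀ i, |w i| * a i * |B.det| < r ^ (d - 1) * ∏ i, a i) :
    ∃ z ∈ columnLattice B, z ≠ 0 ∧ ∀ i, |z i| ≤ ((d : ℝ) - 1) * r * a i := by
  obtain ⟨k, hk⟩ := Function.ne_iff.mp hw0
  have : Nonempty (Fin d) := ⟨k⟩
  obtain ⟨j, hj⟩ := Finite.exists_max fun i => |w i| * a i
  have hwj : w j ≠ 0 := by
    rintro hwj
    have := (mul_pos (abs_pos.mpr hk) (ha k)).trans_le (hj k)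
    simp [hwj] at this
  let c : Fin d → ℝ := Function.update (fun i => r * a i) j 1
  have hc : ∀ i, 0 < c i := (Function.forall_update_iff _ fun _ x => 0 < x).mpr
    ⟨one_pos, fun i _ => mul_pos hr (ha i)⟩
  have det_lt : |w j| * |B.det| < ∏ i, c i := by
    refine lt_of_mul_lt_mul_right ?_ (ha j).le
    rw [prod_update_mul_left_one_mul, Fintype.card_fin, mul_right_comm]
    exact hwr j
  obtain ⟨z, hz, hz0, hwz, hzc⟩ := exists_mem_columnLattice_abs_dotProduct_lt hB hwj hc det_lt
  have dot_eq_zero : w ⬝ᵥ z = 0 := by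
    obtain ⟨n, hn⟩ := hw z hz
    change w ⬝ᵥ z = n at hn
    rw [hn, show c j = 1 from Function.update_self ..] at hwz
    have hn0 : n = 0 := Int.abs_lt_one_iff.mp (by exact_mod_cast hwz)
    rw [hn, hn0, Int.cast_zero]
  have small : ∀ i ≠ j, |z i| ≤ r * a i := fun i hij => by
    simpa only [c, Function.update_of_ne hij] using (hzc i hij).le
  refine ⟨z, hz, hz0, fun i => ?_⟩
  obtain rfl | hij := eq_or_ne i j
  · simpa using abs_apply_le_of_dotProduct_eq_zero dot_eq_zero hwj hr.le hj small
  · have one_le : (1 : ℝ) ≤ d - 1 := by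
      have : (2 : ℝ) ≤ d := by exact_mod_cast hd
      linarith
    rw [mul_assoc]
    exact (small i hij).trans (le_mul_of_one_le_left (mul_pos hr (ha i)).le one_le)

/-- The dilation factors `r > 0` for which `r B_τ` contains a nonzero vector of `Λ`; their infimum
is the first successive minimum. -/
def capturingDilations (d : ℕ) (Λ : Set (Fin d → ℝ)) (τ : Fin d → ℝ) : Set ℝ :=
  {r | 0 < r ∧ ∃ v ∈ Λ, v ≠ 0 ∧ ∀ i, |v i| ≤ r * Real.exp (τ i)}

theorem succMin_one_eq_sInf (Λ : Set (Fin d → ℝ)) (τ : Fin d → ℝ) :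
    succMin d Λ τ 1 = sInf (capturingDilations d Λ τ) := by
  refine congrArg sInf (Set.ext fun r => and_congr_right fun _ => ⟨?_, ?_⟩)
  · rintro ⟨v, hv, hli, hbox⟩
    exact ⟨v 0, hv 0, hli.ne_zero 0, hbox 0⟩
  · rintro ⟨v, hv, hv0, hbox⟩
    exact ⟨fun _ => v, fun _ => hv, linearIndependent_unique_iff.mpr hv0, fun _ => hbox⟩

theorem succMin_one_le {Λ : Set (Fin d → ℝ)} {τ : Fin d → ℝ} {r : ℝ}
    (hr : r ∈ capturingDilations d Λ τ) : succMin d Λ τ 1 ≤ r :=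
  succMin_one_eq_sInf Λ τ ▸ csInf_le ⟨0, fun _ h => h.1.le⟩ hr

theorem capturingDilations_columnLattice_nonempty [NeZero d] (hB : B.det ≠ 0) (τ : Fin d → ℝ) :
    (capturingDilations d (columnLattice B) τ).Nonempty := by
  let x : Fin d → ℤ := Pi.single 0 1
  let v : Fin d → ℝ := B *ᵥ fun i => (x i : ℝ)
  refine ⟨‖fun i => v i / Real.exp (τ i)‖ + 1, by positivity, v, ⟨x, rfl⟩,
    mulVec_intCast_ne_zero hB (Pi.single_ne_zero_iff.mpr one_ne_zero), fun i => ?_⟩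
  rw [← div_le_iff₀ (Real.exp_pos _)]
  calc |v i| / Real.exp (τ i) = ‖v i / Real.exp (τ i)‖ := by
        rw [Real.norm_eq_abs, abs_div, Real.abs_exp]
    _ ≤ ‖fun i => v i / Real.exp (τ i)‖ := norm_le_pi_norm (fun i => v i / Real.exp (τ i)) i
    _ ≤ ‖fun i => v i / Real.exp (τ i)‖ + 1 := le_add_of_nonneg_right zero_le_one

theorem succMin_one_columnLattice_pos [NeZero d] (hB : B.det ≠ 0) (τ : Fin d → ℝ) :
    0 < succMin d (columnLattice B) τ 1 := by
  obtain ⟨ε, hε, hnorm⟩ := exists_pos_forall_mem_columnLattice_le_norm hB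
  let E := ‖fun i => Real.exp (τ i)‖
  have hE : 0 < E := norm_pos_iff.mpr (Function.ne_iff.mpr ⟨0, (Real.exp_pos _).ne'⟩)
  rw [succMin_one_eq_sInf]
  refine (div_pos hε hE).trans_le
    (le_csInf (capturingDilations_columnLattice_nonempty hB τ) ?_)
  rintro r ⟨hr, v, hv, hv0, hbox⟩
  refine (div_le_iff₀ hE).mpr ((hnorm v hv hv0).trans ?_)
  refine (pi_norm_le_iff_of_nonneg (by positivity)).mpr fun i => (hbox i).trans ?_
  gcongr
  exact (le_abs_self _).trans (norm_le_pi_norm (fun i => Real.exp (τ i)) i)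

theorem sub_one_mul_mem_capturingDilations (hB : B.det ≠ 0) (hd : 2 ≤ d) {τ : Fin d → ℝ} {m : ℝ}
    (hm : m ∈ capturingDilations d (dualLattice d (columnLattice B)) (-τ)) {r : ℝ} (hr : 0 < r)
    (hmr : m * |B.det| < r ^ (d - 1) * Real.exp (∑ i, τ i)) :
    ((d : ℝ) - 1) * r ∈ capturingDilations d (columnLattice B) τ := by
  obtain ⟨-, w, hw, hw0, hbox⟩ := hm
  have one_lt : (1 : ℝ) < d := by exact_mod_cast hd
  refine ⟨mul_pos (sub_pos.mpr one_lt) hr,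
    exists_mem_columnLattice_abs_le hB hd hw hw0 (fun i => Real.exp_pos (τ i)) hr fun i => ?_⟩
  have width_le : |w i| * Real.exp (τ i) ≤ m := by
    rw [← le_div_iff₀ (Real.exp_pos _), div_eq_mul_inv, ← Real.exp_neg]
    exact hbox i
  rw [← Real.exp_sum]
  exact (mul_le_mul_of_nonneg_right width_le (abs_nonneg _)).trans_lt hmr

theorem succMin_one_div_pow_mul_exp_sum_le (hB : B.det ≠ 0) (hd : 2 ≤ d) (τ : Fin d → ℝ) :
    (succMin d (columnLattice B) τ 1 / ((d : ℝ) - 1)) ^ (d - 1) * Real.exp (∑ i, τ i) ≤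
      succMin d (dualLattice d (columnLattice B)) (-τ) 1 * |B.det| := by
  have : NeZero d := ⟨by lia⟩
  have one_lt : (1 : ℝ) < d := by exact_mod_cast hd
  have dual_nonempty :
      (capturingDilations d (dualLattice d (columnLattice B)) (-τ)).Nonempty := by
    rw [dualLattice_columnLattice hB]
    refine capturingDilations_columnLattice_nonempty ?_ (-τ)
    rw [det_transpose]
    exact (B.isUnit_nonsing_inv_det hB.isUnit).ne_zero
  set s := succMin d (columnLattice B) τ 1
  have hs : 0 < s := succMin_one_columnLattice_pos hB τ
  by_contra! hlt
  rw [← lt_div_iff₀ (abs_pos.mpr hB), succMin_one_eq_sInf] at hlt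
  obtain ⟨m, hm, hmlt⟩ := exists_lt_of_csInf_lt dual_nonempty hlt
  rw [lt_div_iff₀ (abs_pos.mpr hB), ← div_lt_iff₀ (Real.exp_pos _)] at hmlt
  obtain ⟨r, hr, hmr, hrs⟩ :=
    exists_pow_btwn (by lia : d - 1 ≠ 0) hmlt (pow_pos (div_pos hs (sub_pos.mpr one_lt)) _)
  have r_lt : r < s / ((d : ℝ) - 1) :=
    lt_of_pow_lt_pow_left₀ _ (div_pos hs (sub_pos.mpr one_lt)).le hrs
  have s_le : s ≤ ((d : ℝ) - 1) * r := succMin_one_le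
    (sub_one_mul_mem_capturingDilations hB hd hm hr ((div_lt_iff₀ (Real.exp_pos _)).mp hmr))
  exact s_le.not_gt ((lt_div_iff₀' (sub_pos.mpr one_lt)).mp r_lt)

theorem log_sub_one_le_mul_log_factorial_div (hd : 2 ≤ d) :
    Real.log ((d : ℝ) - 1) ≤ (d : ℝ) * Real.log (Nat.factorial d) / ((d : ℝ) - 1) := by
  have one_lt : (1 : ℝ) < d := by exact_mod_cast hd
  have le_factorial : (d : ℝ) ≤ Nat.factorial d := by exact_mod_cast Nat.self_le_factorial d
  rw [le_div_iff₀' (sub_pos.mpr one_lt)]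
  have log_le : Real.log ((d : ℝ) - 1) ≤ Real.log (Nat.factorial d) :=
    Real.log_le_log (sub_pos.mpr one_lt) (by linarith)
  have log_nonneg : 0 ≤ Real.log (Nat.factorial d) := Real.log_nonneg (by linarith)
  calc ((d : ℝ) - 1) * Real.log ((d : ℝ) - 1)
      ≤ ((d : ℝ) - 1) * Real.log (Nat.factorial d) := by gcongr
    _ ≤ d * Real.log (Nat.factorial d) :=
        mul_le_mul_of_nonneg_right (sub_le_self _ zero_le_one) log_nonneg

theorem stmt7_general (hd : 2 ≤ d) (hB : B.det ≠ 0) (τ : Fin d → ℝ) :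
    Sk d (columnLattice B) τ 1 ≤
      (Sk d (dualLattice d (columnLattice B)) (-τ) 1 + Real.log |B.det| - ∑ i, τ i) /
        ((d : ℝ) - 1) + Real.log ((d : ℝ) - 1) := by
  have : NeZero d := ⟨by lia⟩
  have sub_one_pos : (0 : ℝ) < d - 1 := sub_pos.mpr (by exact_mod_cast hd)
  simp only [Sk, Lk, Finset.Icc_self, Finset.sum_singleton]
  have product_bound := succMin_one_div_pow_mul_exp_sum_le hB hd τ
  set s := succMin d (columnLattice B) τ 1
  set t := succMin d (dualLattice d (columnLattice B)) (-τ) 1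
  have hs : 0 < s := succMin_one_columnLattice_pos hB τ
  have hpow : 0 < (s / ((d : ℝ) - 1)) ^ (d - 1) := pow_pos (div_pos hs sub_one_pos) _
  have ht : 0 < t := pos_of_mul_pos_left
    ((mul_pos hpow (Real.exp_pos _)).trans_le product_bound) (abs_nonneg _)
  have log_bound : ((d : ℝ) - 1) * (Real.log s - Real.log ((d : ℝ) - 1)) + ∑ i, τ i ≤
      Real.log t + Real.log |B.det| := by
    have := Real.log_le_log (mul_pos hpow (Real.exp_pos _)) product_bound
    rwa [Real.log_mul hpow.ne' (Real.exp_pos _).ne', Real.log_exp, Real.log_pow,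
      Real.log_div hs.ne' sub_one_pos.ne', Nat.cast_pred (NeZero.pos d),
      Real.log_mul ht.ne' (abs_ne_zero.mpr hB)] at this
  rw [← sub_le_iff_le_add, le_div_iff₀' sub_one_pos]
  exact le_sub_iff_add_le.mpr log_bound

end Transference

theorem stmt7 (d : ℕ) (hd : 2 ≤ d) :
    (∀ Λ : Set (Fin d → ℝ), IsUnimodularLattice d Λ →
      ∀ τ : Fin d → ℝ, ∑ i, τ i = 0 →
        Sk d Λ τ 1 ≤
          (Sk d (dualLattice d Λ) (-τ) 1 + (d : ℝ) * Real.log (Nat.factorial d)) / ((d : ℝ) - 1)) ∧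
    ∃ C : ℝ, ∀ Λ : Set (Fin d → ℝ), IsUnimodularLattice d Λ →
      ∀ τ : Fin d → ℝ, ∑ i, τ i = 0 →
        Sk d Λ τ 1 ≤ Sk d (dualLattice d Λ) (-τ) 1 / ((d : ℝ) - 1) + C := by
  have transference : ∀ Λ, IsUnimodularLattice d Λ → ∀ τ : Fin d → ℝ, ∑ i, τ i = 0 →
      Sk d Λ τ 1 ≤ Sk d (dualLattice d Λ) (-τ) 1 / ((d : ℝ) - 1) +
        (d : ℝ) * Real.log (Nat.factorial d) / ((d : ℝ) - 1) := by
    rintro _ ⟨B, hB, rfl⟩ τ hτ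
    have general := stmt7_general hd (abs_ne_zero.mp (hB ▸ one_ne_zero)) τ
    rw [hB, hτ, Real.log_one, add_zero, sub_zero] at general
    exact general.trans (add_le_add_right (log_sub_one_le_mul_log_factorial_div hd) _)
  exact ⟨by simpa only [← add_div] using transference, _, transference⟩
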